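/- arXiv:1804.07951 — 4 statements merged into one kernel-verified Lean document; each statement's English description precedes it below -/
import Mathlib

section
/- Let m, c, k, ω be real numbers with 0 < m, 0 < c, 0 < k and 0 < ω, and suppose 2k/m < ω². Then the complex number (iω)² + (c/m)·(iω) + k/m is nonzero and the norm of the frequency response of the autonomous unidirectional constant-spacing controller satisfies ‖((c/m)·(iω) + k/m) / ((iω)² + (c/m)·(iω) + k/m)‖ < 1. -/
/-!
At `s = iω` the denominator is `z - ω²`, where `z = a * s + b` is the numerator. The point `z` is
closer to `0` than to `ω²` exactly when it lies to the left of the perpendicular bisector of the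
segment joining them, that is, when `2 * b = 2 * Re z < ω²`; the damping `a` only contributes to
the imaginary part.
-/

theorem norm_lt_norm_sub_iff {E : Type*} [SeminormedAddCommGroup E] [InnerProductSpace ℝ E]
    (x y : E) : ‖x‖ < ‖x - y‖ ↔ 2 * inner ℝ x y < ‖y‖ ^ 2 := by
  rw [← sq_lt_sq₀ (norm_nonneg x) (norm_nonneg (x - y)), norm_sub_sq_real]
  constructor <;> intro h <;> linarith

theorem norm_lt_norm_sub_ofReal_iff (z : ℂ) {t : ℝ} (ht : 0 < t) :
    ‖z‖ < ‖z - t‖ ↔ 2 * z.re < t := by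
  have inner_eq : inner ℝ z (t : ℂ) = z.re * t := by
    simp [Complex.inner, mul_comm]
  rw [norm_lt_norm_sub_iff, inner_eq, Complex.norm_of_nonneg ht.le, sq, ← mul_assoc,
    mul_lt_mul_iff_left₀ ht]

theorem ne_zero_and_norm_div_lt_one_iff {𝕜 : Type*} [NormedDivisionRing 𝕜] (z w : 𝕜) :
    w ≠ 0 ∧ ‖z / w‖ < 1 ↔ ‖z‖ < ‖w‖ := by
  rw [norm_div, ← norm_pos_iff]
  constructor
  · rintro ⟨w_pos, h⟩
    exact (div_lt_one w_pos).mp h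
  · intro h
    have w_pos : 0 < ‖w‖ := (norm_nonneg z).trans_lt h
    exact ⟨w_pos, (div_lt_one w_pos).mpr h⟩

theorem stmt0_general (a b : ℝ) {ω : ℝ} (hω : ω ≠ 0) :
    ((Complex.I * (ω : ℂ)) ^ 2 + (a : ℂ) * (Complex.I * (ω : ℂ)) + (b : ℂ) ≠ 0 ∧
      ‖((a : ℂ) * (Complex.I * (ω : ℂ)) + (b : ℂ)) /
        ((Complex.I * (ω : ℂ)) ^ 2 + (a : ℂ) * (Complex.I * (ω : ℂ)) + (b : ℂ))‖ < 1) ↔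
      2 * b < ω ^ 2 := by
  have denominator_eq : (Complex.I * (ω : ℂ)) ^ 2 + (a : ℂ) * (Complex.I * (ω : ℂ)) + (b : ℂ) =
      (a : ℂ) * (Complex.I * (ω : ℂ)) + (b : ℂ) - ((ω ^ 2 : ℝ) : ℂ) := by
    rw [mul_pow, Complex.I_sq]
    push_cast
    ring
  have numerator_re : ((a : ℂ) * (Complex.I * (ω : ℂ)) + (b : ℂ)).re = b := by simp
  rw [ne_zero_and_norm_div_lt_one_iff, denominator_eq,
    norm_lt_norm_sub_ofReal_iff _ (sq_pos_of_ne_zero hω), numerator_re]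

theorem stmt0 (m c k ω : ℝ) (hm : 0 < m) (hc : 0 < c) (hk : 0 < k) (hω : 0 < ω)
    (hfreq : 2 * k / m < ω ^ 2) :
    (Complex.I * (ω : ℂ)) ^ 2 + ((c / m : ℝ) : ℂ) * (Complex.I * (ω : ℂ)) + ((k / m : ℝ) : ℂ) ≠ 0 ∧
    ‖(((c / m : ℝ) : ℂ) * (Complex.I * (ω : ℂ)) + ((k / m : ℝ) : ℂ)) /
        ((Complex.I * (ω : ℂ)) ^ 2 + ((c / m : ℝ) : ℂ) * (Complex.I * (ω : ℂ)) + ((k / m : ℝ) : ℂ))‖ < 1 :=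
  (stmt0_general (c / m) (k / m) hω.ne').mpr (mul_div_assoc 2 k m ▸ hfreq)
end

section
/- Let m, c, k, ω be positive reals with 2k/m < ω², set s = iω, and let z₁, z₂ : ℝ → ℂ. Assume: z₁ and z₂ are twice differentiable with continuous first and second derivatives on [0,∞); z₁, z₁', z₂, z₂', z₂'' are all of exponential order a for some real a with a < 0; z₁(0) = 0, z₂(0) = 0 and z₂'(0) = 0; the differential equation z₂''(t) + (c/m)·z₂'(t) + (k/m)·z₂(t) = (c/m)·z₁'(t) + (k/m)·z₁(t) holds for all t ≥ 0; and L[z₁](s) ≠ 0. Then ‖L[z₂](s) / L[z₁](s)‖ < 1, i.e., the platoon with autonomous unidirectional constant-spacing controller is stable at frequency ω. -/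
open MeasureTheory

/-- The Laplace transform of `f : ℝ → ℂ` at `s : ℂ`:  `∫ t in (0,∞), e^{-s t} f t`. -/
noncomputable def laplace (f : ℝ → ℂ) (s : ℂ) : ℂ :=
  ∫ t in Set.Ioi (0 : ℝ), Complex.exp (-(s * t)) * f t

/-- `f` is of exponential order `a`: there is `M > 0` with `‖f t‖ ≤ M e^{a t}` for `t ≥ 0`. -/
def ExpOrder (f : ℝ → ℂ) (a : ℝ) : Prop :=
  ∃ M > 0, ∀ t ≥ (0 : ℝ), ‖f t‖ ≤ M * Real.exp (a * t)

/-!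
Under the Laplace transform the equation `z₂'' + p z₂' + q z₂ = p z₁' + q z₁` becomes
`(p s + q + s²) L[z₂](s) = (p s + q) L[z₁](s)`. At `s = iω` this says that `w = q + ipω` satisfies
`(w - ω²) L[z₂] = w L[z₁]`, and `w` is closer to `0` than to the real point `ω²` as soon as its real
part `q` lies to the left of the midpoint `ω² / 2`.
-/

/-- Absolute convergence of the integral defining `laplace f s`, which would otherwise take the
junk value `0`. -/
def LaplaceConvergent (f : ℝ → ℂ) (s : ℂ) : Prop :=
  IntegrableOn (fun t : ℝ => Complex.exp (-(s * t)) * f t) (Set.Ioi 0)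

section Linearity

variable {f g : ℝ → ℂ} {s : ℂ}

theorem LaplaceConvergent.const_mul (hf : LaplaceConvergent f s) (c : ℂ) :
    LaplaceConvergent (fun t => c * f t) s := by
  simpa only [LaplaceConvergent, mul_left_comm] using! Integrable.const_mul hf c

theorem LaplaceConvergent.add (hf : LaplaceConvergent f s) (hg : LaplaceConvergent g s) :
    LaplaceConvergent (fun t => f t + g t) s := by
  simpa only [LaplaceConvergent, mul_add] using! Integrable.add hf hg

theorem LaplaceConvergent.sub (hf : LaplaceConvergent f s) (hg : LaplaceConvergent g s) :
    LaplaceConvergent (fun t => f t - g t) s := by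
  simpa only [LaplaceConvergent, mul_sub] using! Integrable.sub hf hg

theorem laplace_const_mul (c : ℂ) (f : ℝ → ℂ) (s : ℂ) :
    laplace (fun t => c * f t) s = c * laplace f s := by
  simp only [laplace, mul_left_comm _ c, integral_const_mul]

theorem laplace_add (hf : LaplaceConvergent f s) (hg : LaplaceConvergent g s) :
    laplace (fun t => f t + g t) s = laplace f s + laplace g s := by
  simpa only [laplace, mul_add] using! integral_add hf hg

theorem laplace_sub (hf : LaplaceConvergent f s) (hg : LaplaceConvergent g s) :
    laplace (fun t => f t - g t) s = laplace f s - laplace g s := by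
  simpa only [laplace, mul_sub] using! integral_sub hf hg

end Linearity

theorem ExpOrder.laplaceConvergent {f : ℝ → ℂ} {a : ℝ} {s : ℂ} (hf : ExpOrder f a)
    (hmeas : AEStronglyMeasurable f (volume.restrict (Set.Ioi 0))) (has : a < s.re) :
    LaplaceConvergent f s := by
  obtain ⟨M, -, hM⟩ := hf
  have hdom : IntegrableOn (fun t : ℝ => M * Real.exp ((a - s.re) * t)) (Set.Ioi 0) :=
    (integrableOn_exp_mul_Ioi (sub_neg.mpr has) 0).const_mul M
  have hexp : Continuous fun t : ℝ => Complex.exp (-(s * t)) := by fun_prop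
  refine hdom.mono' (hexp.aestronglyMeasurable.mul hmeas) ?_
  filter_upwards [ae_restrict_mem measurableSet_Ioi] with t ht
  calc ‖Complex.exp (-(s * t)) * f t‖
      = Real.exp (-(s.re * t)) * ‖f t‖ := by simp [Complex.norm_exp]
    _ ≤ Real.exp (-(s.re * t)) * (M * Real.exp (a * t)) := by gcongr; exact hM t ht.le
    _ = M * Real.exp ((a - s.re) * t) := by
      rw [mul_left_comm, ← Real.exp_add]
      ring_nf

theorem hasDerivAt_exp_neg_mul_mul {f : ℝ → ℂ} {f' : ℂ} {t : ℝ} (s : ℂ) (hf : HasDerivAt f f' t) :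
    HasDerivAt (fun u : ℝ => Complex.exp (-(s * u)) * f u)
      (Complex.exp (-(s * t)) * (f' - s * f t)) t := by
  have hexp : HasDerivAt (fun u : ℝ => Complex.exp (-(s * u)))
      (Complex.exp (-(s * t)) * -(s * 1)) t :=
    ((Complex.ofRealCLM.hasDerivAt (x := t)).const_mul s).neg.cexp
  exact (hexp.mul hf).congr_deriv (by ring)

theorem laplace_of_hasDerivWithinAt {f f' : ℝ → ℂ} {s : ℂ}
    (hderiv : ∀ t ∈ Set.Ici (0 : ℝ), HasDerivWithinAt f (f' t) (Set.Ici 0) t)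
    (hf : LaplaceConvergent f s) (hf' : LaplaceConvergent f' s) :
    laplace f' s = s * laplace f s - f 0 := by
  have hderiv_weighted : ∀ t ∈ Set.Ioi (0 : ℝ),
      HasDerivAt (fun u : ℝ => Complex.exp (-(s * u)) * f u)
        (Complex.exp (-(s * t)) * (f' t - s * f t)) t := fun t ht =>
    hasDerivAt_exp_neg_mul_mul s ((hderiv t (Set.Ioi_subset_Ici_self ht)).hasDerivAt
      (Ici_mem_nhds ht))
  have hcont : ContinuousWithinAt (fun u : ℝ => Complex.exp (-(s * u)) * f u) (Set.Ici 0) 0 :=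
    ContinuousWithinAt.mul (Continuous.continuousWithinAt (by fun_prop))
      (hderiv 0 Set.self_mem_Ici).continuousWithinAt
  have hint : LaplaceConvergent (fun t => f' t - s * f t) s := hf'.sub (hf.const_mul s)
  have hlim := tendsto_zero_of_hasDerivAt_of_integrableOn_Ioi hderiv_weighted hint hf
  have hftc : laplace (fun t => f' t - s * f t) s = -f 0 := by
    simpa [laplace] using integral_Ioi_of_hasDerivAt_of_tendsto hcont hderiv_weighted hint hlim
  rw [laplace_sub hf' (hf.const_mul s), laplace_const_mul] at hftc
  linear_combination hftc

theorem mul_laplace_eq_mul_laplace_of_platoon_ode {p q s : ℂ} {z₁ z₂ z₁' z₂' z₂'' : ℝ → ℂ}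
    (hdz₁ : ∀ t ∈ Set.Ici (0 : ℝ), HasDerivWithinAt z₁ (z₁' t) (Set.Ici 0) t)
    (hdz₂ : ∀ t ∈ Set.Ici (0 : ℝ), HasDerivWithinAt z₂ (z₂' t) (Set.Ici 0) t)
    (hdz₂' : ∀ t ∈ Set.Ici (0 : ℝ), HasDerivWithinAt z₂' (z₂'' t) (Set.Ici 0) t)
    (hz₁ : LaplaceConvergent z₁ s) (hz₁' : LaplaceConvergent z₁' s)
    (hz₂ : LaplaceConvergent z₂ s) (hz₂' : LaplaceConvergent z₂' s)
    (hinit₁ : z₁ 0 = 0) (hinit₂ : z₂ 0 = 0) (hinit₂' : z₂' 0 = 0)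
    (hode : ∀ t ≥ (0 : ℝ), z₂'' t + p * z₂' t + q * z₂ t = p * z₁' t + q * z₁ t) :
    (p * s + q + s ^ 2) * laplace z₂ s = (p * s + q) * laplace z₁ s := by
  have hdz₂'_ode : ∀ t ∈ Set.Ici (0 : ℝ),
      HasDerivWithinAt z₂' (p * (z₁' t - z₂' t) + q * (z₁ t - z₂ t)) (Set.Ici 0) t :=
    fun t ht => (hdz₂' t ht).congr_deriv (by linear_combination hode t ht)
  have hvel := (hz₁'.sub hz₂').const_mul p
  have hpos := (hz₁.sub hz₂).const_mul q
  have htransform := laplace_of_hasDerivWithinAt hdz₂'_ode hz₂' (hvel.add hpos)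
  rw [laplace_add hvel hpos, laplace_const_mul, laplace_const_mul, laplace_sub hz₁' hz₂',
    laplace_sub hz₁ hz₂, laplace_of_hasDerivWithinAt hdz₁ hz₁ hz₁',
    laplace_of_hasDerivWithinAt hdz₂ hz₂ hz₂', hinit₁, hinit₂, hinit₂'] at htransform
  linear_combination -htransform

theorem norm_lt_norm_sub_iff_two_mul_inner_lt {F : Type*} [NormedAddCommGroup F]
    [InnerProductSpace ℝ F] (w v : F) : ‖w‖ < ‖w - v‖ ↔ 2 * inner ℝ w v < ‖v‖ ^ 2 := by
  rw [← sq_lt_sq₀ (norm_nonneg w) (norm_nonneg (w - v)), norm_sub_sq_real]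
  constructor <;> intro h <;> linarith

theorem norm_lt_norm_sub_ofReal_sq {w : ℂ} {ω : ℝ} (hω : ω ≠ 0) (hw : 2 * w.re < ω ^ 2) :
    ‖w‖ < ‖w - (ω : ℂ) ^ 2‖ := by
  have hinner : inner ℝ w ((ω : ℂ) ^ 2) = ω ^ 2 * w.re := by
    rw [Complex.inner, ← Complex.ofReal_pow, Complex.re_ofReal_mul, Complex.conj_re]
  have hnorm : ‖(ω : ℂ) ^ 2‖ = ω ^ 2 := by simp
  rw [norm_lt_norm_sub_iff_two_mul_inner_lt, hinner, hnorm]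
  nlinarith [mul_lt_mul_of_pos_left hw (sq_pos_of_ne_zero hω)]

theorem stmt4_general {p q ω : ℝ} (hω : ω ≠ 0) (hfreq : 2 * q < ω ^ 2)
    {z₁ z₂ z₁' z₂' z₂'' : ℝ → ℂ}
    (hdz₁ : ∀ t ∈ Set.Ici (0 : ℝ), HasDerivWithinAt z₁ (z₁' t) (Set.Ici 0) t)
    (hdz₂ : ∀ t ∈ Set.Ici (0 : ℝ), HasDerivWithinAt z₂ (z₂' t) (Set.Ici 0) t)
    (hdz₂' : ∀ t ∈ Set.Ici (0 : ℝ), HasDerivWithinAt z₂' (z₂'' t) (Set.Ici 0) t)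
    (hz₁ : LaplaceConvergent z₁ (Complex.I * ω)) (hz₁' : LaplaceConvergent z₁' (Complex.I * ω))
    (hz₂ : LaplaceConvergent z₂ (Complex.I * ω)) (hz₂' : LaplaceConvergent z₂' (Complex.I * ω))
    (hinit₁ : z₁ 0 = 0) (hinit₂ : z₂ 0 = 0) (hinit₂' : z₂' 0 = 0)
    (hode : ∀ t ≥ (0 : ℝ),
      z₂'' t + (p : ℂ) * z₂' t + (q : ℂ) * z₂ t = (p : ℂ) * z₁' t + (q : ℂ) * z₁ t)
    (hL : laplace z₁ (Complex.I * ω) ≠ 0) :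
    ‖laplace z₂ (Complex.I * ω) / laplace z₁ (Complex.I * ω)‖ < 1 := by
  set w : ℂ := p * (Complex.I * ω) + q with hw
  have hlt : ‖w‖ < ‖w - (ω : ℂ) ^ 2‖ := norm_lt_norm_sub_ofReal_sq hω (by simpa [hw] using hfreq)
  have hpos : 0 < ‖w - (ω : ℂ) ^ 2‖ := (norm_nonneg w).trans_lt hlt
  have htransfer :
      (w - (ω : ℂ) ^ 2) * laplace z₂ (Complex.I * ω) = w * laplace z₁ (Complex.I * ω) := by
    simpa only [mul_pow, Complex.I_sq, neg_one_mul, ← sub_eq_add_neg] using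
      mul_laplace_eq_mul_laplace_of_platoon_ode hdz₁ hdz₂ hdz₂' hz₁ hz₁' hz₂ hz₂' hinit₁ hinit₂
        hinit₂' hode
  have hratio :
      laplace z₂ (Complex.I * ω) / laplace z₁ (Complex.I * ω) = w / (w - (ω : ℂ) ^ 2) := by
    rw [div_eq_div_iff hL (norm_pos_iff.mp hpos), mul_comm, htransfer]
  rwa [hratio, norm_div, div_lt_one hpos]

theorem stmt4 (m c k ω : ℝ) (hm : 0 < m) (hc : 0 < c) (hk : 0 < k) (hω : 0 < ω)
    (hfreq : 2 * k / m < ω ^ 2)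
    (s : ℂ) (hs : s = Complex.I * (ω : ℂ)) (a : ℝ) (ha : a < 0)
    (z₁ z₂ z₁' z₁'' z₂' z₂'' : ℝ → ℂ)
    (hdz₁ : ∀ t ∈ Set.Ici (0 : ℝ), HasDerivWithinAt z₁ (z₁' t) (Set.Ici 0) t)
    (hdz₁' : ∀ t ∈ Set.Ici (0 : ℝ), HasDerivWithinAt z₁' (z₁'' t) (Set.Ici 0) t)
    (hdz₂ : ∀ t ∈ Set.Ici (0 : ℝ), HasDerivWithinAt z₂ (z₂' t) (Set.Ici 0) t)
    (hdz₂' : ∀ t ∈ Set.Ici (0 : ℝ), HasDerivWithinAt z₂' (z₂'' t) (Set.Ici 0) t)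
    (hcz₁' : ContinuousOn z₁' (Set.Ici 0)) (hcz₁'' : ContinuousOn z₁'' (Set.Ici 0))
    (hcz₂' : ContinuousOn z₂' (Set.Ici 0)) (hcz₂'' : ContinuousOn z₂'' (Set.Ici 0))
    (hez₁ : ExpOrder z₁ a) (hez₁' : ExpOrder z₁' a)
    (hez₂ : ExpOrder z₂ a) (hez₂' : ExpOrder z₂' a) (hez₂'' : ExpOrder z₂'' a)
    (hinit₁ : z₁ 0 = 0) (hinit₂ : z₂ 0 = 0) (hinit₂' : z₂' 0 = 0)
    (hode : ∀ t ≥ (0 : ℝ),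
      z₂'' t + ((c / m : ℝ) : ℂ) * z₂' t + ((k / m : ℝ) : ℂ) * z₂ t
        = ((c / m : ℝ) : ℂ) * z₁' t + ((k / m : ℝ) : ℂ) * z₁ t)
    (hL : laplace z₁ s ≠ 0) :
    ‖laplace z₂ s / laplace z₁ s‖ < 1 := by
  subst hs
  have convergent {f : ℝ → ℂ} (hf : ContinuousOn f (Set.Ici 0)) (he : ExpOrder f a) :
      LaplaceConvergent f (Complex.I * ω) :=
    he.laplaceConvergent ((hf.mono Set.Ioi_subset_Ici_self).aestronglyMeasurable measurableSet_Ioi)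
      (by simpa using ha)
  exact stmt4_general hω.ne' (by rwa [← mul_div_assoc]) hdz₁ hdz₂ hdz₂'
    (convergent (HasDerivWithinAt.continuousOn hdz₁) hez₁) (convergent hcz₁' hez₁')
    (convergent (HasDerivWithinAt.continuousOn hdz₂) hez₂) (convergent hcz₂' hez₂')
    hinit₁ hinit₂ hinit₂' hode hL
end

section
/- Let m, c, k, ω be positive reals. Then ‖((c/m)·(iω) + k/m) / ((iω)² + (2c/m)·(iω) + 2k/m)‖ < 1 if and only if 0 < m²·ω⁴ + (3c² − 4k·m)·ω² + 3k². -/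
/-!
The gain is less than one exactly when the numerator is smaller in norm than the denominator. Both
are real polynomials evaluated on the imaginary axis, so their squared norms are explicit real
polynomials in `ω`, and `m ^ 2` times the difference of the two is the stated quartic.
-/

theorem norm_div_lt_one_iff_sq_lt_sq {𝕜 : Type*} [NormedDivisionRing 𝕜] (z : 𝕜) {w : 𝕜}
    (hw : w ≠ 0) : ‖z / w‖ < 1 ↔ ‖z‖ ^ 2 < ‖w‖ ^ 2 := by
  rw [norm_div, div_lt_one (norm_pos_iff.mpr hw),
    sq_lt_sq₀ (norm_nonneg z) (norm_nonneg w)]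

section ImaginaryAxis

open Complex

theorem linear_I_mul_eq (a b ω : ℝ) :
    (b : ℂ) * (I * ω) + a = (a : ℂ) + ((b * ω : ℝ) : ℂ) * I := by
  push_cast
  ring

theorem monic_quadratic_I_mul_eq (p q ω : ℝ) :
    (I * (ω : ℂ)) ^ 2 + p * (I * ω) + q = ((q - ω ^ 2 : ℝ) : ℂ) + ((p * ω : ℝ) : ℂ) * I := by
  rw [mul_pow, I_sq]
  push_cast
  ring

theorem sq_norm_linear_I_mul (a b ω : ℝ) :
    ‖(b : ℂ) * (I * ω) + a‖ ^ 2 = a ^ 2 + (b * ω) ^ 2 := by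
  rw [linear_I_mul_eq, Complex.sq_norm, normSq_add_mul_I]

theorem sq_norm_monic_quadratic_I_mul (p q ω : ℝ) :
    ‖(I * (ω : ℂ)) ^ 2 + p * (I * ω) + q‖ ^ 2 = (q - ω ^ 2) ^ 2 + (p * ω) ^ 2 := by
  rw [monic_quadratic_I_mul_eq, Complex.sq_norm, normSq_add_mul_I]

theorem monic_quadratic_I_mul_ne_zero {p ω : ℝ} (hp : p ≠ 0) (q : ℝ) (hω : ω ≠ 0) :
    (I * (ω : ℂ)) ^ 2 + p * (I * ω) + q ≠ 0 := by
  have norm_sq_pos : 0 < ‖(I * (ω : ℂ)) ^ 2 + p * (I * ω) + q‖ ^ 2 := by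
    rw [sq_norm_monic_quadratic_I_mul]
    positivity
  exact norm_ne_zero_iff.mp (pow_ne_zero_iff two_ne_zero |>.mp norm_sq_pos.ne')

end ImaginaryAxis

theorem sq_mul_sum_sq_sub_sum_sq_eq_quartic {F : Type*} [Field F] {m : F} (hm : m ≠ 0) (c k ω : F) :
    m ^ 2 * ((2 * k / m - ω ^ 2) ^ 2 + (2 * c / m * ω) ^ 2 - ((k / m) ^ 2 + (c / m * ω) ^ 2)) =
      m ^ 2 * ω ^ 4 + (3 * c ^ 2 - 4 * k * m) * ω ^ 2 + 3 * k ^ 2 := by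
  field_simp
  ring

theorem stmt10_general {m c k ω : ℝ} (hm : m ≠ 0)
    (hden : (Complex.I * (ω : ℂ)) ^ 2 + ((2 * c / m : ℝ) : ℂ) * (Complex.I * (ω : ℂ)) +
      ((2 * k / m : ℝ) : ℂ) ≠ 0) :
    ‖(((c / m : ℝ) : ℂ) * (Complex.I * (ω : ℂ)) + ((k / m : ℝ) : ℂ)) /
        ((Complex.I * (ω : ℂ)) ^ 2 + ((2 * c / m : ℝ) : ℂ) * (Complex.I * (ω : ℂ)) +
          ((2 * k / m : ℝ) : ℂ))‖ < 1 ↔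
      0 < m ^ 2 * ω ^ 4 + (3 * c ^ 2 - 4 * k * m) * ω ^ 2 + 3 * k ^ 2 := by
  rw [norm_div_lt_one_iff_sq_lt_sq _ hden, sq_norm_linear_I_mul, sq_norm_monic_quadratic_I_mul,
    ← sub_pos, ← sq_mul_sum_sq_sub_sum_sq_eq_quartic hm, mul_pos_iff_of_pos_left (by positivity)]

theorem stmt10 (m c k ω : ℝ) (hm : 0 < m) (hc : 0 < c) (hk : 0 < k) (hω : 0 < ω) :
    ‖(((c / m : ℝ) : ℂ) * (Complex.I * (ω : ℂ)) + ((k / m : ℝ) : ℂ)) /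
        ((Complex.I * (ω : ℂ)) ^ 2 + ((2 * c / m : ℝ) : ℂ) * (Complex.I * (ω : ℂ)) + ((2 * k / m : ℝ) : ℂ))‖ < 1 ↔
      0 < m ^ 2 * ω ^ 4 + (3 * c ^ 2 - 4 * k * m) * ω ^ 2 + 3 * k ^ 2 := by
  exact stmt10_general hm.ne' (monic_quadratic_I_mul_ne_zero (by positivity) _ hω.ne')
end

section
/- Let f : ℝ → ℂ be differentiable on [0,∞) with f and its derivative f' continuous on [0,∞), and suppose both f and f' are of exponential order a for some real a. Then for every s ∈ ℂ with a < Re s, the Laplace transform of the derivative satisfies L[f'](s) = s · L[f](s) − f(0). -/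
open MeasureTheory

/-!
Integrate the derivative of `t ↦ exp (-s t) f t` over `(0, ∞)`. The boundary term at infinity
vanishes because an integrable function with integrable derivative tends to zero, so only `-f 0`
remains. Integrability is comparison with `exp (-(Re s - a) t)`, the derivative of `f` being
measurable as a limit of difference quotients.
-/

theorem aestronglyMeasurable_restrict_of_hasDerivAt {𝕜 E : Type*} [NontriviallyNormedField 𝕜]
    [MeasurableSpace 𝕜] [OpensMeasurableSpace 𝕜] [NormedAddCommGroup E] [NormedSpace 𝕜 E]
    [CompleteSpace E] [SecondCountableTopologyEither 𝕜 E] {f f' : 𝕜 → E} {S : Set 𝕜}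
    {μ : Measure 𝕜} (hS : MeasurableSet S) (hderiv : ∀ t ∈ S, HasDerivAt f (f' t) t) :
    AEStronglyMeasurable f' (μ.restrict S) :=
  (aestronglyMeasurable_deriv f _).congr <|
    ae_restrict_of_forall_mem hS fun t ht => (hderiv t ht).deriv

theorem hasDerivAt_cexp_neg_mul_mul {f : ℝ → ℂ} {f₀ : ℂ} {t : ℝ} (s : ℂ)
    (hf : HasDerivAt f f₀ t) :
    HasDerivAt (fun t : ℝ => Complex.exp (-(s * t)) * f t)
      (Complex.exp (-(s * t)) * f₀ - s * (Complex.exp (-(s * t)) * f t)) t := by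
  have hexp : HasDerivAt (fun t : ℝ => Complex.exp (-(s * t)))
      (Complex.exp (-(s * t)) * -(s * 1)) t :=
    ((hasDerivAt_id t).ofReal_comp.const_mul s).fun_neg.cexp
  exact (hexp.fun_mul hf).congr_deriv (by ring)

theorem norm_cexp_neg_mul_ofReal (s : ℂ) (t : ℝ) :
    ‖Complex.exp (-(s * t))‖ = Real.exp (-(s.re * t)) := by
  simp [Complex.norm_exp]

theorem ExpOrder.integrableOn_cexp_neg_mul_mul {f : ℝ → ℂ} {a : ℝ} {s : ℂ} (hf : ExpOrder f a)
    (hmeas : AEStronglyMeasurable f (volume.restrict (Set.Ioi 0))) (hs : a < s.re) :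
    IntegrableOn (fun t : ℝ => Complex.exp (-(s * t)) * f t) (Set.Ioi 0) := by
  obtain ⟨M, -, hM⟩ := hf
  have hdom : IntegrableOn (fun t : ℝ => M * Real.exp (-(s.re - a) * t)) (Set.Ioi 0) :=
    (exp_neg_integrableOn_Ioi 0 (sub_pos.2 hs)).const_mul M
  have hexp : Continuous fun t : ℝ => Complex.exp (-(s * t)) := by fun_prop
  refine hdom.mono' (hexp.aestronglyMeasurable.mul hmeas) ?_
  filter_upwards [ae_restrict_mem measurableSet_Ioi] with t ht
  calc ‖Complex.exp (-(s * t)) * f t‖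
      = Real.exp (-(s.re * t)) * ‖f t‖ := by rw [norm_mul, norm_cexp_neg_mul_ofReal]
    _ ≤ Real.exp (-(s.re * t)) * (M * Real.exp (a * t)) := by gcongr; exact hM t (le_of_lt ht)
    _ = M * Real.exp (-(s.re * t) + a * t) := by rw [Real.exp_add]; ring
    _ = M * Real.exp (-(s.re - a) * t) := by ring_nf

theorem laplace_deriv_of_integrableOn {f f' : ℝ → ℂ} {s : ℂ}
    (hcont : ContinuousWithinAt f (Set.Ici 0) 0)
    (hderiv : ∀ t ∈ Set.Ioi (0 : ℝ), HasDerivAt f (f' t) t)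
    (hf : IntegrableOn (fun t : ℝ => Complex.exp (-(s * t)) * f t) (Set.Ioi 0))
    (hf' : IntegrableOn (fun t : ℝ => Complex.exp (-(s * t)) * f' t) (Set.Ioi 0)) :
    laplace f' s = s * laplace f s - f 0 := by
  have hprod : ∀ t ∈ Set.Ioi (0 : ℝ), HasDerivAt (fun t : ℝ => Complex.exp (-(s * t)) * f t)
      (Complex.exp (-(s * t)) * f' t - s * (Complex.exp (-(s * t)) * f t)) t :=
    fun t ht => hasDerivAt_cexp_neg_mul_mul s (hderiv t ht)
  have hprod_int := hf'.sub (hf.const_mul s)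
  have hexp : Continuous fun t : ℝ => Complex.exp (-(s * t)) := by fun_prop
  have hFTC : laplace f' s - s * laplace f s = 0 - f 0 := by
    calc laplace f' s - s * laplace f s
        = ∫ t in Set.Ioi (0 : ℝ),
            (Complex.exp (-(s * t)) * f' t - s * (Complex.exp (-(s * t)) * f t)) := by
          rw [integral_sub hf' (hf.const_mul s), integral_const_mul, laplace, laplace]
      _ = 0 - Complex.exp (-(s * (0 : ℝ))) * f 0 :=
          integral_Ioi_of_hasDerivAt_of_tendsto (hexp.continuousWithinAt.mul hcont) hprod hprod_int
            (tendsto_zero_of_hasDerivAt_of_integrableOn_Ioi hprod hprod_int hf)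
      _ = 0 - f 0 := by simp
  linear_combination hFTC

theorem stmt16_general {f f' : ℝ → ℂ} {a : ℝ} {s : ℂ}
    (hcont : ContinuousWithinAt f (Set.Ici 0) 0)
    (hderiv : ∀ t ∈ Set.Ioi (0 : ℝ), HasDerivAt f (f' t) t)
    (hf : ExpOrder f a) (hf' : ExpOrder f' a) (hs : a < s.re) :
    laplace f' s = s * laplace f s - f 0 := by
  have hf_cont : ContinuousOn f (Set.Ioi 0) := fun t ht =>
    (hderiv t ht).continuousAt.continuousWithinAt
  have hf_meas : AEStronglyMeasurable f (volume.restrict (Set.Ioi 0)) :=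
    hf_cont.aestronglyMeasurable measurableSet_Ioi
  have hf'_meas : AEStronglyMeasurable f' (volume.restrict (Set.Ioi 0)) :=
    aestronglyMeasurable_restrict_of_hasDerivAt measurableSet_Ioi hderiv
  exact laplace_deriv_of_integrableOn hcont hderiv
    (hf.integrableOn_cexp_neg_mul_mul hf_meas hs) (hf'.integrableOn_cexp_neg_mul_mul hf'_meas hs)

theorem stmt16 (f f' : ℝ → ℂ) (a : ℝ)
    (hdf : ∀ t ∈ Set.Ici (0 : ℝ), HasDerivWithinAt f (f' t) (Set.Ici 0) t)
    (hcf : ContinuousOn f (Set.Ici 0)) (hcf' : ContinuousOn f' (Set.Ici 0))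
    (hef : ExpOrder f a) (hef' : ExpOrder f' a) :
    ∀ s : ℂ, a < s.re → laplace f' s = s * laplace f s - f 0 :=
  fun _ => stmt16_general (hcf 0 Set.self_mem_Ici)
    (fun t ht => (hdf t (Set.Ioi_subset_Ici_self ht)).hasDerivAt (Ici_mem_nhds ht)) hef hef'
end
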